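/- Let Π ⊆ ℝ^d be a nonempty closed convex set, δ ∈ (0,1), r ≥ 0, σ an invertible d×d real matrix, and b, z ∈ ℝ^d. Set w = σ⁻¹(b − r𝟙) + z and v = w/(1−δ). Then sup over p ∈ Π of [ (1/2)δ(δ−1) pᵀ σσᵀ p + δ pᵀ(b − r𝟙) + δ pᵀ σ z ] = −(1/2)δ(1−δ) · dist²( v, σᵀΠ ) + (1/2)(δ/(1−δ)) ‖w‖², where σᵀΠ = { σᵀp : p ∈ Π }, dist(v, σᵀΠ) is the Euclidean distance from v to σᵀΠ, and ‖·‖ is the Euclidean norm. -/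

import Mathlib

open Matrix

/-- Matrix–vector multiplication on Euclidean space. -/
noncomputable def mvE {d : ℕ} (M : Matrix (Fin d) (Fin d) ℝ) (v : EuclideanSpace ℝ (Fin d)) :
    EuclideanSpace ℝ (Fin d) :=
  (WithLp.equiv 2 (Fin d → ℝ)).symm (M.mulVec (WithLp.equiv 2 (Fin d → ℝ) v))

/-- Euclidean dot product `xᵀ y`. -/
noncomputable def dotE {d : ℕ} (x y : EuclideanSpace ℝ (Fin d)) : ℝ := ∑ i, x i * y i

/-! The objective depends on `p` only through `q = σᵀp`, because `w` satisfies `σw = b − r𝟙 + σz`.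
Completing the square in `q` turns it into a constant minus a nonnegative multiple of the squared
distance from `v` to `q`, so its supremum is read off from the infimum of that distance.
In the Hilbert space form an operator `A` takes the place of `σ`, and `a` that of `b − r𝟙`. -/

open scoped InnerProductSpace

theorem isLUB_image_sub_mul_dist_sq {X : Type*} [PseudoMetricSpace X] {s : Set X}
    (hs : s.Nonempty) (x : X) {c : ℝ} (hc : 0 ≤ c) (C : ℝ) :
    IsLUB ((fun y => C - c * dist x y ^ 2) '' s) (C - c * Metric.infDist x s ^ 2) := by
  have h_anti : AntitoneOn (fun t : ℝ => C - c * t ^ 2) (dist x '' s) := by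
    rintro _ ⟨y, -, rfl⟩ t - hyt
    dsimp only
    gcongr
  have h_cont : Continuous fun t : ℝ => C - c * t ^ 2 := by fun_prop
  have h_lub := (Metric.isGLB_infDist hs).isLUB_of_tendsto h_anti (hs.image _)
    (h_cont.tendsto _ |>.mono_left nhdsWithin_le_nhds)
  rwa [Set.image_image] at h_lub

theorem inner_sub_mul_norm_sq_eq_sub_mul_dist_sq {F : Type*} [SeminormedAddCommGroup F]
    [InnerProductSpace ℝ F] {κ : ℝ} (hκ : κ ≠ 0) (q w : F) :
    ⟪q, w⟫_ℝ - κ / 2 * ‖q‖ ^ 2 = 1 / 2 * (1 / κ) * ‖w‖ ^ 2 - κ / 2 * dist ((1 / κ) • w) q ^ 2 := by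
  rw [dist_eq_norm, norm_sub_sq_real, norm_smul, mul_pow, Real.norm_eq_abs, sq_abs,
    real_inner_smul_left, real_inner_comm q w]
  field

section Hilbert

variable {E F : Type*} [NormedAddCommGroup E] [InnerProductSpace ℝ E] [CompleteSpace E]
  [NormedAddCommGroup F] [InnerProductSpace ℝ F] [CompleteSpace F]

open ContinuousLinearMap

theorem quadratic_eq_sub_mul_dist_adjoint_sq {δ : ℝ} (hδ : δ ≠ 1) {A : F →L[ℝ] E} {a : E}
    {z w : F} (hw : A w = a + A z) (p : E) :
    1 / 2 * δ * (δ - 1) * ⟪p, A (adjoint A p)⟫_ℝ + δ * ⟪p, a⟫_ℝ + δ * ⟪p, A z⟫_ℝ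
      = 1 / 2 * (δ / (1 - δ)) * ‖w‖ ^ 2
        - 1 / 2 * δ * (1 - δ) * dist ((1 / (1 - δ)) • w) (adjoint A p) ^ 2 := by
  have h_quad : ⟪p, A (adjoint A p)⟫_ℝ = ‖adjoint A p‖ ^ 2 := by
    rw [← adjoint_inner_left, real_inner_self_eq_norm_sq]
  have h_lin : ⟪p, a⟫_ℝ + ⟪p, A z⟫_ℝ = ⟪adjoint A p, w⟫_ℝ := by
    rw [← inner_add_right, ← hw, adjoint_inner_left]
  have h_square := inner_sub_mul_norm_sq_eq_sub_mul_dist_sq (sub_ne_zero.2 hδ.symm) (adjoint A p) w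
  calc
    _ = δ * (⟪adjoint A p, w⟫_ℝ - (1 - δ) / 2 * ‖adjoint A p‖ ^ 2) := by
      rw [h_quad, ← h_lin]
      ring
    _ = _ := by
      rw [h_square]
      ring

theorem stmt_9_general {δ : ℝ} (hδ₀ : 0 ≤ δ) (hδ₁ : δ < 1) {A : F →L[ℝ] E} {s : Set E}
    (hs : s.Nonempty) {a : E} {z w : F} (hw : A w = a + A z) :
    IsLUB ((fun p => 1 / 2 * δ * (δ - 1) * ⟪p, A (adjoint A p)⟫_ℝ
        + δ * ⟪p, a⟫_ℝ + δ * ⟪p, A z⟫_ℝ) '' s)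
      (-(1 / 2) * δ * (1 - δ) * Metric.infDist ((1 / (1 - δ)) • w) (adjoint A '' s) ^ 2
        + 1 / 2 * (δ / (1 - δ)) * ‖w‖ ^ 2) := by
  have hc : 0 ≤ 1 / 2 * δ * (1 - δ) := mul_nonneg (by positivity) (sub_nonneg.2 hδ₁.le)
  simp only [quadratic_eq_sub_mul_dist_adjoint_sq hδ₁.ne hw]
  convert isLUB_image_sub_mul_dist_sq (hs.image (adjoint A)) ((1 / (1 - δ)) • w) hc
    (1 / 2 * (δ / (1 - δ)) * ‖w‖ ^ 2) using 1
  · rw [Set.image_image]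
  · ring

end Hilbert

section Matrix

theorem mvE_eq_toEuclideanCLM {d : ℕ} (M : Matrix (Fin d) (Fin d) ℝ)
    (x : EuclideanSpace ℝ (Fin d)) : mvE M x = toEuclideanCLM (𝕜 := ℝ) M x :=
  rfl

theorem dotE_eq_inner {d : ℕ} (x y : EuclideanSpace ℝ (Fin d)) : dotE x y = ⟪x, y⟫_ℝ := by
  simp [dotE, PiLp.inner_apply, mul_comm]

variable {n : Type*} [Fintype n] [DecidableEq n]

theorem toEuclideanCLM_transpose (M : Matrix n n ℝ) :
    toEuclideanCLM (𝕜 := ℝ) Mᵀ = ContinuousLinearMap.adjoint (toEuclideanCLM (𝕜 := ℝ) M) := by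
  rw [← conjTranspose_eq_transpose_of_trivial, ← star_eq_conjTranspose, map_star,
    ContinuousLinearMap.star_eq_adjoint]

theorem toEuclideanCLM_apply_nonsing_inv {𝕜 : Type*} [RCLike 𝕜] {M : Matrix n n 𝕜}
    (hM : IsUnit M.det) (x : EuclideanSpace 𝕜 n) :
    toEuclideanCLM (𝕜 := 𝕜) M (toEuclideanCLM (𝕜 := 𝕜) M⁻¹ x) = x := by
  rw [← mul_apply_eq_comp, ← map_mul, mul_nonsing_inv M hM, map_one, one_apply_eq_self]

end Matrix

/-- completion-of-squares identity,
`sup_{p ∈ Π} [ (1/2)δ(δ−1) pᵀσσᵀp + δ pᵀ(b−r𝟙) + δ pᵀσz ]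
  = −(1/2)δ(1−δ) dist²(v, σᵀΠ) + (1/2)(δ/(1−δ))‖w‖²`,
where `w = σ⁻¹(b − r𝟙) + z` and `v = w/(1−δ)`. -/
theorem stmt_9 (d : ℕ) (δ r : ℝ) (hδ : δ ∈ Set.Ioo (0 : ℝ) 1) (hr : 0 ≤ r)
    (σ : Matrix (Fin d) (Fin d) ℝ) (hσ : IsUnit σ.det)
    (Pset : Set (EuclideanSpace ℝ (Fin d))) (hPne : Pset.Nonempty)
    (hPclosed : IsClosed Pset) (hPconv : Convex ℝ Pset)
    (b z : EuclideanSpace ℝ (Fin d))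
    (ones : EuclideanSpace ℝ (Fin d)) (hones : ∀ i, ones i = 1)
    (w v : EuclideanSpace ℝ (Fin d))
    (hw : w = mvE σ⁻¹ (b - r • ones) + z)
    (hv : v = (1 / (1 - δ)) • w) :
    sSup ((fun p : EuclideanSpace ℝ (Fin d) =>
        1 / 2 * δ * (δ - 1) * dotE p (mvE (σ * σᵀ) p)
          + δ * dotE p (b - r • ones) + δ * dotE p (mvE σ z)) '' Pset)
      = -(1 / 2) * δ * (1 - δ) * (Metric.infDist v ((fun p => mvE σᵀ p) '' Pset)) ^ 2
        + 1 / 2 * (δ / (1 - δ)) * ‖w‖ ^ 2 := by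
  subst hw hv
  simp only [mvE_eq_toEuclideanCLM, map_mul, mul_apply_eq_comp, toEuclideanCLM_transpose,
    dotE_eq_inner]
  refine (stmt_9_general hδ.1.le hδ.2 hPne ?_).csSup_eq (hPne.image _)
  rw [map_add, toEuclideanCLM_apply_nonsing_inv hσ]
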